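/- arXiv:math/0010260 — 3 statements merged into one kernel-verified Lean document; each statement's English description precedes it below -/
import Mathlib

section
/- Suppose γ : ℕ × ℕ → ℕ is such that for every prime p, every finite extension L of ℚ_p of degree d' with residue field degree f_L, and every k×n m-sparse polynomial system over L, the number of isolated roots of that system in L^n is at most p^{d'n}·(1 − 1/p^{f_L})^n·γ(n,m). Fix a prime p and positive integers d and δ, let L be the compositum inside a fixed algebraic closure of ℚ_p (contained in ℂ_p) of all finite extensions of ℚ_p of degree at most dδ, and let D_p and f_p be the degree and residue field degree of L over ℚ_p. Then for every degree-d algebraic extension 𝓛 of ℚ_p, regarded as a subfield of ℂ_p, and every k×n m-sparse polynomial system G over 𝓛, the number of isolated roots of G in ℂ_p^n of degree at most δ over 𝓛 is at most p^{nD_p}·(1 − 1/p^{f_p})^n·γ(n,m). -/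
/-!
Every point counted in the theorem has its coordinates in the compositum `L`. Indeed, if `x` has
degree at most `δ` over `𝓛`, then `𝓛(x)` has degree at most `d * δ` over `ℚ_p`, so `𝓛(x) ≤ L`
(`mem_sSup_of_hasDegreeAtMost`). The same argument with `x = 0` puts the image of `𝓛` inside `L`,
so `G` may be viewed as a system over `L`, with the same supports because `𝓛 → L` is injective.
The points counted are then among the isolated roots of this system with coordinates in `L`,
and the assumed bound for `L` applies.
-/


open MvPolynomial Filter Topology

/-- The zero set in `F^n` of a `k`-tuple of `n`-variate polynomials. -/
def zeroSet {F : Type*} [CommSemiring F] {k n : ℕ}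
    (G : Fin k → MvPolynomial (Fin n) F) : Set (Fin n → F) :=
  {x | ∀ i, MvPolynomial.eval x (G i) = 0}

/-- `ζ` is an isolated root of the system `G`: it is a root, and an isolated point of the
zero set of `G` in the metric topology. -/
def IsIsolatedRoot {F : Type*} [NormedField F] {k n : ℕ}
    (G : Fin k → MvPolynomial (Fin n) F) (ζ : Fin n → F) : Prop :=
  ζ ∈ zeroSet G ∧ 𝓝[zeroSet G \ {ζ}] ζ = ⊥

/-- A `k × n` `m`-sparse polynomial system: all the `gᵢ` are nonzero and the union of their
supports has exactly `m` elements. -/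
def IsSparseSystem {F : Type*} [CommSemiring F] {k n : ℕ}
    (G : Fin k → MvPolynomial (Fin n) F) (m : ℕ) : Prop :=
  (∀ i, G i ≠ 0) ∧ (Finset.univ.biUnion fun i => (G i).support).card = m

/-- The property that `γ : ℕ × ℕ → ℕ` bounds the number of isolated roots of sparse systems
over finite extensions of `ℚ_p`, for all primes `p`.  Here `Cp` ranges over all fields
satisfying the characterizing axioms of `ℂ_p` (a complete algebraically closed ultrametric
field, containing `ℚ_p` isometrically, in which the elements algebraic over `ℚ_p` are dense),
`L` is a degree-`d` extension of `ℚ_p` regarded as a subfield of `ℂ_p`, with ramification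
degree `eL` and residue field degree `fL` (characterized by `eL * fL = d` together with the
fact that the value group of `L` is `(1/eL)·ℤ`, i.e. `‖L*‖ = p^{(1/eL)·ℤ}`). -/
def LocalSparseBound (γ : ℕ × ℕ → ℕ) : Prop :=
  ∀ (p : ℕ) (_ : Fact p.Prime) (d : ℕ) (_ : 0 < d)
    (Cp : Type) (_ : NormedField Cp) (_ : IsUltrametricDist Cp)
    (_ : CompleteSpace Cp) (_ : IsAlgClosed Cp) (_ : Algebra ℚ_[p] Cp)
    (_ : Isometry (algebraMap ℚ_[p] Cp))
    (_ : Dense {x : Cp | IsAlgebraic ℚ_[p] x})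
    (L : Type) (_ : Field L) (_ : Algebra ℚ_[p] L) (_ : Algebra L Cp)
    (_ : IsScalarTower ℚ_[p] L Cp) (_ : FiniteDimensional ℚ_[p] L)
    (_ : Module.finrank ℚ_[p] L = d)
    (eL fL : ℕ) (_ : 0 < eL) (_ : eL * fL = d)
    (_ : ∀ x : L, x ≠ 0 → ∃ j : ℤ, ‖algebraMap L Cp x‖ = (p : ℝ) ^ ((j : ℝ) / (eL : ℝ)))
    (_ : ∃ x : L, x ≠ 0 ∧ ‖algebraMap L Cp x‖ = (p : ℝ) ^ (-(1 : ℝ) / (eL : ℝ)))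
    (k n m : ℕ) (G : Fin k → MvPolynomial (Fin n) L), IsSparseSystem G m →
      {ζ : Fin n → L | IsIsolatedRoot (fun i => (G i).map (algebraMap L Cp))
          (fun j => algebraMap L Cp (ζ j))}.Finite ∧
      ({ζ : Fin n → L | IsIsolatedRoot (fun i => (G i).map (algebraMap L Cp))
          (fun j => algebraMap L Cp (ζ j))}.ncard : ℝ) ≤
        (p : ℝ) ^ (d * n) * (1 - 1 / (p : ℝ) ^ fL) ^ n * γ (n, m)


/-- `x` is algebraic of degree at most `δ` over (the image of) `L`, i.e. it is annihilated by
some nonzero polynomial over `L` of degree at most `δ`. -/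
def HasDegreeAtMost {L F : Type*} [Field L] [Field F] (ι : L →+* F) (δ : ℕ) (x : F) : Prop :=
  ∃ q : Polynomial L, q ≠ 0 ∧ q.natDegree ≤ δ ∧ Polynomial.eval₂ ι x q = 0

/-- The simple extension `𝓛(x)`, viewed over `K`, is one of the fields in the compositum; it
contains both `x` and the image of `𝓛`. -/
lemma mem_sSup_of_hasDegreeAtMost {K M C : Type*} [Field K] [Field M] [Field C] [Algebra K M]
    [Algebra M C] [Algebra K C] [IsScalarTower K M C] [FiniteDimensional K M] {d δ : ℕ}
    (hd : Module.finrank K M = d) {x : C} (hx : HasDegreeAtMost (algebraMap M C) δ x) :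
    x ∈ sSup {F : IntermediateField K C | FiniteDimensional K ↥F ∧ Module.finrank K ↥F ≤ d * δ} ∧
    ∀ a : M, algebraMap M C a ∈
      sSup {F : IntermediateField K C | FiniteDimensional K ↥F ∧ Module.finrank K ↥F ≤ d * δ} := by
  obtain ⟨q, hq0, hqδ, hq⟩ := hx
  have hint : IsIntegral M x := IsAlgebraic.isIntegral ⟨q, hq0, hq⟩
  have : FiniteDimensional M (IntermediateField.adjoin M {x}) :=
    IntermediateField.adjoin.finiteDimensional hint
  have hdeg : Module.finrank M (IntermediateField.adjoin M {x}) ≤ δ := by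
    rw [IntermediateField.adjoin.finrank hint]
    exact (Polynomial.natDegree_le_of_dvd (minpoly.dvd M x hq) hq0).trans hqδ
  have hmem : (IntermediateField.adjoin M {x}).restrictScalars K ∈
      {F : IntermediateField K C | FiniteDimensional K ↥F ∧ Module.finrank K ↥F ≤ d * δ} := by
    refine ⟨FiniteDimensional.trans K M (IntermediateField.adjoin M {x}), ?_⟩
    change Module.finrank K (IntermediateField.adjoin M {x}) ≤ d * δ
    rw [← Module.finrank_mul_finrank K M (IntermediateField.adjoin M {x}), hd]
    exact Nat.mul_le_mul_left d hdeg
  have hle := le_sSup hmem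
  exact ⟨hle (IntermediateField.mem_adjoin_simple_self M x),
    fun a => hle ((IntermediateField.adjoin M {x}).algebraMap_mem a)⟩

lemma IsSparseSystem.map {F E : Type*} [Field F] [Field E] {k n m : ℕ}
    {G : Fin k → MvPolynomial (Fin n) F} (hG : IsSparseSystem G m) (φ : F →+* E) :
    IsSparseSystem (fun i => (G i).map φ) m := by
  refine ⟨fun i h => hG.1 i ?_, ?_⟩
  · exact MvPolynomial.map_injective φ φ.injective (by simpa using h)
  · rw [← hG.2]
    simp only [MvPolynomial.support_map_of_injective _ φ.injective]

/-- **Explicit bound for Corollary 3, `p`-adic case.** Suppose `γ(n,m)` bounds the number of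
isolated roots of sparse systems over finite extensions of `ℚ_p` as in Theorem 1.  Let `L` be
the compositum inside `ℂ_p` of all finite extensions of `ℚ_p` of degree at most `d·δ` (i.e.
the supremum of all finite-dimensional intermediate fields of `ℂ_p/ℚ_p` of degree at most
`d·δ`; these all lie in the algebraic closure of `ℚ_p` inside `ℂ_p`), and let `Dp` and `fp`
be its degree and residue field degree over `ℚ_p`.  Then any `k × n` `m`-sparse polynomial
system over a degree-`d` extension `𝓛` of `ℚ_p` has at most `p^{n·Dp}·(1 - 1/p^{fp})^n·γ(n,m)`
isolated roots in `ℂ_pⁿ` of degree at most `δ` over `𝓛`. -/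
theorem bounded_degree_roots_padic_explicit (γ : ℕ × ℕ → ℕ) (hγ : LocalSparseBound γ)
    (p : ℕ) [Fact p.Prime] (d δ : ℕ) (hd : 0 < d) (hδ : 0 < δ) :
    ∀ (Cp : Type) (_ : NormedField Cp) (_ : IsUltrametricDist Cp)
      (_ : CompleteSpace Cp) (_ : IsAlgClosed Cp) (_ : Algebra ℚ_[p] Cp)
      (_ : Isometry (algebraMap ℚ_[p] Cp))
      (_ : Dense {x : Cp | IsAlgebraic ℚ_[p] x})
      (L : IntermediateField ℚ_[p] Cp),
      L = sSup {F : IntermediateField ℚ_[p] Cp |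
            FiniteDimensional ℚ_[p] ↥F ∧ Module.finrank ℚ_[p] ↥F ≤ d * δ} →
      ∀ (_ : FiniteDimensional ℚ_[p] ↥L) (Dp fp ep : ℕ),
        Module.finrank ℚ_[p] ↥L = Dp → 0 < ep → ep * fp = Dp →
        (∀ x : ↥L, x ≠ 0 → ∃ j : ℤ, ‖(x : Cp)‖ = (p : ℝ) ^ ((j : ℝ) / (ep : ℝ))) →
        (∃ x : ↥L, x ≠ 0 ∧ ‖(x : Cp)‖ = (p : ℝ) ^ (-(1 : ℝ) / (ep : ℝ))) →
      ∀ (𝓛 : Type) (_ : Field 𝓛) (_ : Algebra ℚ_[p] 𝓛) (_ : Algebra 𝓛 Cp)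
        (_ : IsScalarTower ℚ_[p] 𝓛 Cp) (_ : FiniteDimensional ℚ_[p] 𝓛)
        (_ : Module.finrank ℚ_[p] 𝓛 = d)
        (k n m : ℕ) (G : Fin k → MvPolynomial (Fin n) 𝓛), IsSparseSystem G m →
          {x : Fin n → Cp | IsIsolatedRoot (fun i => (G i).map (algebraMap 𝓛 Cp)) x ∧
              ∀ i, HasDegreeAtMost (algebraMap 𝓛 Cp) δ (x i)}.Finite ∧
          ({x : Fin n → Cp | IsIsolatedRoot (fun i => (G i).map (algebraMap 𝓛 Cp)) x ∧
              ∀ i, HasDegreeAtMost (algebraMap 𝓛 Cp) δ (x i)}.ncard : ℝ) ≤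
            (p : ℝ) ^ (n * Dp) * (1 - 1 / (p : ℝ) ^ fp) ^ n * γ (n, m) := by
  intro Cp _ _ _ _ _ hiso hdense L hL _ Dp fp ep hDp hep hef hval hunif 𝓛 _ _ _ _ _ hfin k n m G hG
  have hzero : HasDegreeAtMost (algebraMap 𝓛 Cp) δ (0 : Cp) :=
    ⟨Polynomial.X, Polynomial.X_ne_zero, by rw [Polynomial.natDegree_X]; exact hδ, by simp⟩
  have h𝓛 : ∀ a : 𝓛, algebraMap 𝓛 Cp a ∈ L := by
    rw [hL]
    exact (mem_sSup_of_hasDegreeAtMost hfin hzero).2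
  let φ : 𝓛 →+* L := (algebraMap 𝓛 Cp).codRestrict L h𝓛
  have hφ : (algebraMap L Cp).comp φ = algebraMap 𝓛 Cp := rfl
  have hDpos : 0 < Dp := hDp ▸ Module.finrank_pos
  obtain ⟨hF, hB⟩ := hγ p inferInstance Dp hDpos Cp inferInstance inferInstance inferInstance
    inferInstance inferInstance hiso hdense L inferInstance inferInstance inferInstance
    inferInstance inferInstance hDp ep fp hep hef hval hunif k n m
    (fun i => (G i).map φ) (hG.map φ)
  simp only [MvPolynomial.map_map, hφ] at hF hB
  set S := {ζ : Fin n → L | IsIsolatedRoot (fun i => (G i).map (algebraMap 𝓛 Cp))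
          (fun j => algebraMap L Cp (ζ j))}
  have hsub : {x : Fin n → Cp | IsIsolatedRoot (fun i => (G i).map (algebraMap 𝓛 Cp)) x ∧
      ∀ i, HasDegreeAtMost (algebraMap 𝓛 Cp) δ (x i)} ⊆
      (fun (ζ : Fin n → L) j => algebraMap L Cp (ζ j)) '' S := by
    rintro x ⟨hx, hxδ⟩
    have hxL : ∀ i, x i ∈ L := fun i => by
      rw [hL]
      exact (mem_sSup_of_hasDegreeAtMost hfin (hxδ i)).1
    exact ⟨fun i => ⟨x i, hxL i⟩, hx, rfl⟩
  refine ⟨(hF.image _).subset hsub, ?_⟩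
  rw [mul_comm n Dp]
  refine le_trans ?_ hB
  exact_mod_cast (Set.ncard_le_ncard hsub (hF.image _)).trans (Set.ncard_image_le hF)
end

section
/- Suppose γ : ℕ × ℕ → ℕ is such that for every prime p, every finite extension L of ℚ_p of degree d' with residue field degree f_L, and every k×n m-sparse polynomial system over L, the number of isolated roots of that system in L^n is at most p^{d'n}·(1 − 1/p^{f_L})^n·γ(n,m). Fix positive integers d and δ, let L be the compositum inside a fixed algebraic closure of ℚ_2 (contained in ℂ_2) of all finite extensions of ℚ_2 of degree at most dδ, and let D_2 and f_2 be the degree and residue field degree of L over ℚ_2. Then for every degree-d algebraic extension 𝓛 of ℚ, regarded as a subfield of ℂ, and every k×n m-sparse polynomial system G over 𝓛, the number of isolated roots of G in ℂ^n of degree at most δ over 𝓛 is at most 2^{nD_2}·(1 − 1/2^{f_2})^n·γ(n,m). -/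
/-!
Since `ℂ₂` is algebraically closed of characteristic zero and at least as large as `ℂ`, there is
a field embedding `τ : ℂ → ℂ₂` (`exists_hom_complex`). A coordinate of degree at most `δ` over `𝓛`
has degree at most `dδ` over `ℚ`, so `τ` sends it into the compositum `L`, and likewise for the
coefficients of `G`. Hence `τ` maps the roots to be counted injectively into the `L`-rational roots
of an `m`-sparse system over `L`, and the local bound applies once `τ`, which is far from
continuous, is known to preserve isolatedness.

That is `IsIsolatedRoot.map_hom`. It rests on an algebraic certificate of isolatedness
(`exists_certificate_of_isIsolatedRoot`): if `x ∈ ℂⁿ` is isolated, then for each `i` there are `h`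
with `h(x) ≠ 0` and `N` such that `h (X_i - x_i)^N` lies in the ideal generated by `G`. Such an
identity survives any field embedding and forces isolatedness in any field topology. Without a
certificate there is a prime `p ⊇ (G)` strictly contained in the maximal ideal of `x`, and then
`x` is a limit of other points of `V(p)` (`exists_near_point`).

The last fact is proved by Noether normalization: `B = ℂ[X]/p` is integral over a polynomial ring
`A` in `s ≥ 1` variables. Let `a` be the image of `x` in `ℂˢ`, and choose `u ∈ B` that vanishes at
`x` but at no other point of the fibre over `a`. As `A` is integrally closed, `A[u] ≅ A[U]/(F)`
with `F` the minimal polynomial of `u`. For `b → a`, `b ≠ a`, the specialization of `F` at `b` has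
a root tending to `0`, because its constant term does, and lying over lifts `b` together with this
root to a point of `V(p)` (`exists_point_over`). These points are bounded, and any limit point of
them lies over `a` and has `u = 0`, so it is `x`.
-/

open MvPolynomial Filter Topology

/-! ### Size of the roots of a monic polynomial -/

theorem pow_card_le_multiset_prod (c : ℝ) (hc : 0 ≤ c) (s : Multiset ℝ) (h : ∀ w ∈ s, c ≤ w) :
    c ^ s.card ≤ s.prod := by
  induction s using Multiset.induction_on with
  | empty => simp
  | cons b s ih =>
    rw [Multiset.card_cons, Multiset.prod_cons, pow_succ']
    exact mul_le_mul (h b (Multiset.mem_cons_self b s))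
      (ih fun w hw => h w (Multiset.mem_cons_of_mem hw)) (pow_nonneg hc _)
      (hc.trans (h b (Multiset.mem_cons_self b s)))

/-- The product of the roots is the constant term up to sign, so the smallest root is small when the
constant term is. -/
theorem exists_root_norm_pow_le (q : Polynomial ℂ) (hq : q.Monic) (hdeg : 0 < q.natDegree) :
    ∃ w : ℂ, q.eval w = 0 ∧ ‖w‖ ^ q.natDegree ≤ ‖q.coeff 0‖ := by
  have hs := IsAlgClosed.splits q
  have h0 : ‖q.coeff 0‖ = (q.roots.map (fun w => ‖w‖)).prod := by
    rw [hs.coeff_zero_eq_prod_roots_of_monic hq, norm_mul, norm_pow, norm_neg, norm_one, one_pow,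
      one_mul]
    exact map_multiset_prod (normHom : ℂ →*₀ ℝ) q.roots
  have hcard : q.roots.card = q.natDegree := hs.natDegree_eq_card_roots.symm
  have hne : q.roots.toFinset.Nonempty := by
    rw [Multiset.toFinset_nonempty]
    intro h
    rw [h] at hcard
    simp at hcard
    omega
  obtain ⟨w, hw, hmin⟩ := q.roots.toFinset.exists_min_image (fun w => ‖w‖) hne
  refine ⟨w, (Polynomial.isRoot_of_mem_roots (Multiset.mem_toFinset.1 hw)), ?_⟩
  rw [h0, ← hcard]
  have := pow_card_le_multiset_prod ‖w‖ (norm_nonneg w) (q.roots.map (fun w => ‖w‖)) (by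
    intro r hr
    obtain ⟨z, hz, rfl⟩ := Multiset.mem_map.1 hr
    exact hmin z (Multiset.mem_toFinset.2 hz))
  simpa using this

/-- A form of Cauchy's bound that is visibly continuous in the coefficients. -/
theorem norm_root_le (q : Polynomial ℂ) (hq : q.Monic) (z : ℂ) (hz : q.eval z = 0) :
    ‖z‖ ≤ ∑ j ∈ Finset.range q.natDegree, ‖q.coeff j‖ + 1 := by
  have h := Polynomial.IsRoot.norm_lt_cauchyBound hq.ne_zero hz
  have h2 : q.cauchyBound ≤ ∑ j ∈ Finset.range q.natDegree, ‖q.coeff j‖₊ + 1 := by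
    rw [Polynomial.cauchyBound, hq.leadingCoeff]
    simp only [nnnorm_one, div_one]
    gcongr
    exact Finset.sup_le fun j hj => Finset.single_le_sum (f := fun j => ‖q.coeff j‖₊)
      (fun _ _ => zero_le) hj
  have h3 := NNReal.coe_le_coe.2 (h.le.trans h2)
  push_cast at h3
  exact h3

/-! ### Complex points near a non-isolated point -/

/-- Let `B` be an integral extension of `A = ℂ[T₁, …, T_s]` via `g`, and `F` the minimal polynomial
of `u : B` over `A`. Every point `a` of `ℂˢ` together with a root `w` of `F` specialized at `a` lifts
to a `ℂ`-point of `B`, by lying over for `A[u] ≅ A[U]/(F) ⊆ B`. -/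
theorem exists_point_over {s : ℕ} {B : Type} [CommRing B] [IsDomain B] [Algebra ℂ B]
    [Algebra.FiniteType ℂ B] (g : MvPolynomial (Fin s) ℂ →ₐ[ℂ] B) (hg : Function.Injective g)
    (hint : g.IsIntegral) (u : B) (F : Polynomial (MvPolynomial (Fin s) ℂ))
    (hF : letI := g.toAlgebra; F = minpoly (MvPolynomial (Fin s) ℂ) u)
    (a : Fin s → ℂ) (w : ℂ) (hw : F.eval₂ (MvPolynomial.eval a) w = 0) :
    ∃ φ : B →ₐ[ℂ] ℂ, (∀ c, φ (g c) = MvPolynomial.eval a c) ∧ φ u = w := by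
  let : Algebra (MvPolynomial (Fin s) ℂ) B := g.toAlgebra
  have hmap : ∀ c, algebraMap (MvPolynomial (Fin s) ℂ) B c = g c := fun c => rfl
  have : IsScalarTower ℂ (MvPolynomial (Fin s) ℂ) B :=
    IsScalarTower.of_algebraMap_eq fun c => (g.commutes c).symm
  have : Algebra.IsIntegral (MvPolynomial (Fin s) ℂ) B := ⟨hint⟩
  have : FaithfulSMul (MvPolynomial (Fin s) ℂ) B :=
    (faithfulSMul_iff_algebraMap_injective _ _).2 hg
  change F = minpoly (MvPolynomial (Fin s) ℂ) u at hF
  subst hF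
  have hu : IsIntegral (MvPolynomial (Fin s) ℂ) u := Algebra.IsIntegral.isIntegral u
  let h : AdjoinRoot (minpoly (MvPolynomial (Fin s) ℂ) u) →ₐ[MvPolynomial (Fin s) ℂ] B :=
    (Algebra.adjoin (MvPolynomial (Fin s) ℂ) {u}).val.comp
      (AdjoinRoot.Minpoly.toAdjoin (MvPolynomial (Fin s) ℂ) u)
  have hinj : Function.Injective h :=
    Subtype.val_injective.comp (minpoly.ToAdjoin.injective hu)
  have hroot : h (AdjoinRoot.root _) = u := by simp [h]
  let ψ : AdjoinRoot (minpoly (MvPolynomial (Fin s) ℂ) u) →+* ℂ :=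
    AdjoinRoot.lift (MvPolynomial.eval a) w hw
  have hψof : ∀ c, ψ (algebraMap _ _ c) = MvPolynomial.eval a c := fun c => by
    exact AdjoinRoot.lift_of hw
  have hψsurj : Function.Surjective ψ := fun c => ⟨algebraMap _ _ (C c), by rw [hψof]; simp⟩
  have : (RingHom.ker ψ).IsMaximal := RingHom.ker_isMaximal_of_surjective ψ hψsurj
  let := h.toAlgebra
  have : IsScalarTower (MvPolynomial (Fin s) ℂ)
    (AdjoinRoot (minpoly (MvPolynomial (Fin s) ℂ) u)) B :=
    IsScalarTower.of_algebraMap_eq fun c => (h.commutes c).symm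
  have : Algebra.IsIntegral (AdjoinRoot (minpoly (MvPolynomial (Fin s) ℂ) u)) B :=
    Algebra.IsIntegral.tower_top (R := MvPolynomial (Fin s) ℂ)
  obtain ⟨Q, hQ, hQP⟩ := Ideal.exists_ideal_over_maximal_of_isIntegral (S := B) (RingHom.ker ψ)
    (by
      intro z hz
      have : z = 0 := hinj (by rw [map_zero]; exact hz)
      subst this; exact zero_mem _)
  let : Field (B ⧸ Q) := Ideal.Quotient.field Q
  have : Module.Finite ℂ (B ⧸ Q) := finite_of_finite_type_of_isJacobsonRing ℂ (B ⧸ Q)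
  have hbij := IsAlgClosed.algebraMap_bijective_of_isIntegral (k := ℂ) (K := B ⧸ Q)
  -- Nullstellensatz: the residue field at `Q` is `ℂ`.
  let e : ℂ ≃ₐ[ℂ] (B ⧸ Q) := AlgEquiv.ofBijective (Algebra.ofId ℂ (B ⧸ Q)) hbij
  let φ : B →ₐ[ℂ] ℂ := e.symm.toAlgHom.comp (Ideal.Quotient.mkₐ ℂ Q)
  have key : ∀ z, φ (h z) = ψ z := by
    intro z
    have hz : z - algebraMap (MvPolynomial (Fin s) ℂ) _ (C (ψ z)) ∈ RingHom.ker ψ := by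
      rw [RingHom.mem_ker, map_sub, hψof]; simp
    rw [← hQP, Ideal.mem_comap, map_sub] at hz
    change h z - h _ ∈ Q at hz
    rw [h.commutes] at hz
    have h1 : Ideal.Quotient.mkₐ ℂ Q (h z) = e (ψ z) := by
      have := (Ideal.Quotient.eq).2 hz
      refine this.trans ?_
      rw [hmap]
      have : g (C (ψ z)) = algebraMap ℂ B (ψ z) := g.commutes _
      rw [this]
      rfl
    change e.symm (Ideal.Quotient.mkₐ ℂ Q (h z)) = _
    rw [h1]; simp
  refine ⟨φ, fun c => ?_, ?_⟩
  · rw [← hψof, ← key, h.commutes]; rfl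
  · rw [← hroot, key]; exact AdjoinRoot.lift_root hw

/-- If the prime `p` is strictly contained in the maximal ideal of `x`, as witnessed by `f₀`, then `x`
is an accumulation point of `V(p)` in the metric topology of `ℂⁿ`. -/
theorem exists_near_point {n : ℕ} (p : Ideal (MvPolynomial (Fin n) ℂ)) [p.IsPrime]
    (x : Fin n → ℂ) (hpx : ∀ f ∈ p, MvPolynomial.eval x f = 0)
    (f₀ : MvPolynomial (Fin n) ℂ) (hf₀ : MvPolynomial.eval x f₀ = 0) (hf₀p : f₀ ∉ p)
    (U : Set (Fin n → ℂ)) (hU : U ∈ 𝓝 x) :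
    ∃ y ∈ U, y ≠ x ∧ ∀ f ∈ p, MvPolynomial.eval y f = 0 := by
  obtain ⟨s, g, hg, hint⟩ := exists_integral_inj_algHom_of_fg ℂ (MvPolynomial (Fin n) ℂ ⧸ p)
  set B := MvPolynomial (Fin n) ℂ ⧸ p with hB
  let mk : MvPolynomial (Fin n) ℂ →ₐ[ℂ] B := Ideal.Quotient.mkₐ ℂ p
  have hmk : Function.Surjective mk := Ideal.Quotient.mkₐ_surjective ℂ p
  -- `φx` is the point `x` of `B`, and `a` below is its image in `ℂˢ`.
  let φx : B →ₐ[ℂ] ℂ := Ideal.Quotient.liftₐ p (MvPolynomial.aeval x) (fun f hf => hpx f hf)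
  have hφx : ∀ f, φx (mk f) = MvPolynomial.eval x f := fun f => rfl
  -- A `ℂ`-algebra map `B → ℂ` is evaluation at a point.
  have hpt : ∀ φ : B →ₐ[ℂ] ℂ, ∀ f, φ (mk f) = MvPolynomial.eval (fun i => φ (mk (X i))) f := by
    intro φ f
    have : φ.comp mk = MvPolynomial.aeval (fun i => φ (mk (X i))) := by ext i; simp
    exact DFunLike.congr_fun this f
  let a : Fin s → ℂ := fun j => φx (g (X j))
  have ha : ∀ c, φx (g c) = MvPolynomial.eval a c := by
    intro c
    have : φx.comp g = MvPolynomial.aeval a := by ext i; simp [a]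
    exact DFunLike.congr_fun this c
  -- For `s = 0` the domain `B` would be integral over `ℂ`, hence equal to `ℂ`, and `p` maximal.
  have hs : 0 < s := by
    rcases Nat.eq_zero_or_pos s with rfl | h
    · exfalso
      have hgC : ∀ c, algebraMap ℂ B (MvPolynomial.eval a c) = g c := fun c => by
        rw [MvPolynomial.eq_C_of_isEmpty c, eval_C]
        exact (g.commutes _).symm
      have hcomp : (algebraMap ℂ B).comp (MvPolynomial.eval a) = (g : _ →+* B) :=
        RingHom.ext hgC
      have : Algebra.IsIntegral ℂ B := ⟨fun b => by
        obtain ⟨q, hq, hqb⟩ := hint b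
        refine ⟨q.map (MvPolynomial.eval a), hq.map _, ?_⟩
        rw [Polynomial.eval₂_map, hcomp]
        exact hqb⟩
      have hbij := IsAlgClosed.algebraMap_bijective_of_isIntegral (k := ℂ) (K := B)
      obtain ⟨z, hz⟩ := hbij.2 (mk f₀)
      have h1 : φx (mk f₀) = z := by rw [← hz]; simp
      rw [hφx, hf₀] at h1
      rw [← h1, map_zero] at hz
      exact hf₀p (Ideal.Quotient.eq_zero_iff_mem.1 hz.symm)
    · exact h
  -- `P i` is a monic equation over `A` for the coordinate `X i`.
  choose P hPm hP using fun i : Fin n => hint (mk (X i))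
  -- `q b i` is the specialization of `P i` at the point `b` of the base.
  let q : (Fin s → ℂ) → Fin n → Polynomial ℂ := fun b i => (P i).map (MvPolynomial.eval b)
  have hqm : ∀ b i, (q b i).Monic := fun b i => (hPm i).map _
  have hqroot : ∀ (φ : B →ₐ[ℂ] ℂ) b, (∀ c, φ (g c) = MvPolynomial.eval b c) → ∀ i,
      (q b i).eval (φ (mk (X i))) = 0 := by
    intro φ b hb i
    have h1 : φ ((P i).eval₂ (g : _ →+* B) (mk (X i))) = 0 := by
      have := hP i
      rw [show (P i).eval₂ (g : _ →+* B) (mk (X i)) = 0 from this, map_zero]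
    have h2 := Polynomial.hom_eval₂ (P i) (g : _ →+* B) (φ : B →+* ℂ) (mk (X i))
    rw [Polynomial.eval_map]
    have h3 : (φ : B →+* ℂ).comp (g : _ →+* B) = MvPolynomial.eval b := RingHom.ext hb
    rw [h3] at h2
    exact h2.symm.trans h1
  -- `v` vanishes at the points of the fibre over `a` other than `x`, but not at `x`.
  let v : MvPolynomial (Fin n) ℂ :=
    ∏ i, ∏ r ∈ (q a i).roots.toFinset.erase (x i), (X i - C r)
  have hveval : ∀ y, MvPolynomial.eval y v =
      ∏ i, ∏ r ∈ (q a i).roots.toFinset.erase (x i), (y i - r) := by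
    intro y; simp [v, map_prod]
  have hvx : MvPolynomial.eval x v ≠ 0 := by
    rw [hveval]
    refine Finset.prod_ne_zero_iff.2 fun i _ => Finset.prod_ne_zero_iff.2 fun r hr => ?_
    exact sub_ne_zero.2 (Finset.ne_of_mem_erase hr).symm
  have hvfib : ∀ y, (∀ i, (q a i).eval (y i) = 0) → MvPolynomial.eval y v ≠ 0 → y = x := by
    intro y hy hyv
    rw [hveval] at hyv
    funext i
    by_contra hne
    have h1 := Finset.prod_ne_zero_iff.1 hyv i (Finset.mem_univ i)
    have h2 := Finset.prod_ne_zero_iff.1 h1 (y i) (Finset.mem_erase.2 ⟨hne,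
      Multiset.mem_toFinset.2 ((Polynomial.mem_roots (hqm a i).ne_zero).2 (hy i))⟩)
    exact h2 (sub_self _)
  let u : B := mk (v - C (MvPolynomial.eval x v))
  let _ : Algebra (MvPolynomial (Fin s) ℂ) B := g.toAlgebra
  let F : Polynomial (MvPolynomial (Fin s) ℂ) := minpoly (MvPolynomial (Fin s) ℂ) u
  have hu : IsIntegral (MvPolynomial (Fin s) ℂ) u := hint u
  have hFm : F.Monic := minpoly.monic hu
  have hFd : 0 < F.natDegree := minpoly.natDegree_pos hu
  have hF0 : MvPolynomial.eval a (F.coeff 0) = 0 := by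
    have h1 : Polynomial.aeval u F = 0 := minpoly.aeval _ u
    have h2 := Polynomial.hom_eval₂ F (g : _ →+* B) (φx : B →+* ℂ) u
    have h3 : (φx : B →+* ℂ) u = 0 := by
      change φx (mk _) = 0
      rw [hφx]; simp
    rw [show F.eval₂ (g : _ →+* B) u = 0 from h1, map_zero, h3, Polynomial.eval₂_at_zero] at h2
    rw [← ha]
    exact h2.symm
  -- A sequence of base points tending to `a` but never equal to it; this uses `s ≥ 1`.
  let b : ℕ → Fin s → ℂ := fun k j => a j + ((1 / ((k : ℝ) + 1) : ℝ) : ℂ)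
  have hb : Tendsto b atTop (𝓝 a) := by
    rw [tendsto_pi_nhds]
    intro j
    have h1 := tendsto_one_div_add_atTop_nhds_zero_nat (𝕜 := ℝ)
    have h2 := (Complex.continuous_ofReal.tendsto 0).comp h1
    have h3 := h2.const_add (a j)
    simpa [b] using h3
  have hba : ∀ k, b k ≠ a := by
    intro k h
    have h1 := congrFun h ⟨0, hs⟩
    have h2 : ((1 / ((k : ℝ) + 1) : ℝ) : ℂ) = 0 := by simpa [b] using h1
    have h3 : (1 / ((k : ℝ) + 1) : ℝ) ≠ 0 := by positivity
    exact h3 (by exact_mod_cast h2)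
  have hex : ∀ k, ∃ φ : B →ₐ[ℂ] ℂ, (∀ c, φ (g c) = MvPolynomial.eval (b k) c) ∧
      ‖φ u‖ ^ F.natDegree ≤ ‖MvPolynomial.eval (b k) (F.coeff 0)‖ := by
    intro k
    have hd : (F.map (MvPolynomial.eval (b k))).natDegree = F.natDegree := hFm.natDegree_map _
    obtain ⟨w, hw, hwn⟩ := exists_root_norm_pow_le (F.map (MvPolynomial.eval (b k)))
      (hFm.map _) (hd ▸ hFd)
    rw [hd, Polynomial.coeff_map] at hwn
    rw [Polynomial.eval_map] at hw
    obtain ⟨φ, h1, h2⟩ := exists_point_over g hg hint u F rfl (b k) w hw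
    exact ⟨φ, h1, h2 ▸ hwn⟩
  choose φ hφ hφu using hex
  let y : ℕ → Fin n → ℂ := fun k i => φ k (mk (X i))
  have hu0 : Tendsto (fun k => φ k u) atTop (𝓝 0) := by
    have h1 : Tendsto (fun k => ‖MvPolynomial.eval (b k) (F.coeff 0)‖) atTop (𝓝 0) := by
      have := ((MvPolynomial.continuous_eval (F.coeff 0)).tendsto a).comp hb
      rw [hF0] at this
      simpa using this.norm
    have h2 : Tendsto (fun k => ‖φ k u‖ ^ F.natDegree) atTop (𝓝 0) :=
      squeeze_zero (fun k => by positivity) hφu h1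
    have h3 : Tendsto (fun k => (‖φ k u‖ ^ F.natDegree) ^ ((F.natDegree : ℝ)⁻¹)) atTop (𝓝 0) := by
      have := h2.rpow_const (p := (F.natDegree : ℝ)⁻¹) (Or.inr (by positivity))
      rwa [Real.zero_rpow (by positivity)] at this
    rw [tendsto_zero_iff_norm_tendsto_zero]
    refine h3.congr fun k => ?_
    exact Real.pow_rpow_inv_natCast (norm_nonneg _) hFd.ne'
  have hqc : ∀ i j, Continuous fun c => (q c i).coeff j := by
    intro i j
    simp only [q, Polynomial.coeff_map]
    exact MvPolynomial.continuous_eval _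
  have hqd : ∀ c i, (q c i).natDegree = (P i).natDegree := fun c i => (hPm i).natDegree_map _
  have hbdd : ∀ i, ∃ M, ∀ k, ‖y k i‖ ≤ M := by
    intro i
    have h1 : Continuous fun c => ∑ j ∈ Finset.range (P i).natDegree, ‖(q c i).coeff j‖ + 1 := by
      have := hqc i
      fun_prop
    have h2 := (h1.tendsto a).comp hb
    obtain ⟨M, hM⟩ := h2.bddAbove_range
    refine ⟨M, fun k => le_trans ?_ (hM ⟨k, rfl⟩)⟩
    have := norm_root_le (q (b k) i) (hqm _ _) (y k i) (hqroot (φ k) (b k) (hφ k) i)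
    rwa [hqd] at this
  choose M hM using hbdd
  have hbox : Bornology.IsBounded (Set.pi Set.univ fun i => Metric.closedBall (0 : ℂ) (M i)) :=
    Bornology.IsBounded.pi fun i => Metric.isBounded_closedBall
  obtain ⟨y', -, θ, hθ, hlim⟩ := tendsto_subseq_of_bounded hbox (x := y)
    (fun k i _ => by simpa using hM i k)
  have hy'v : MvPolynomial.eval y' v = MvPolynomial.eval x v := by
    have h1 := ((MvPolynomial.continuous_eval v).tendsto y').comp hlim
    have h2 := (hu0.comp hθ.tendsto_atTop).add_const (MvPolynomial.eval x v)
    rw [zero_add] at h2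
    refine tendsto_nhds_unique h1 (h2.congr fun k => ?_)
    change φ (θ k) (mk _) + _ = MvPolynomial.eval (y (θ k)) v
    rw [hpt]
    simp [y]
  have hy'q : ∀ i, (q a i).eval (y' i) = 0 := by
    intro i
    have h0 : Tendsto (fun k => (y ∘ θ) k i) atTop (𝓝 (y' i)) := (tendsto_pi_nhds.1 hlim) i
    have h1 : Tendsto (fun k => ∑ j ∈ Finset.range ((P i).natDegree + 1),
        (q (b (θ k)) i).coeff j * (y ∘ θ) k i ^ j) atTop
        (𝓝 (∑ j ∈ Finset.range ((P i).natDegree + 1), (q a i).coeff j * y' i ^ j)) := by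
      refine tendsto_finsetSum _ fun j _ => Tendsto.mul ?_ (h0.pow j)
      exact (((hqc i j).tendsto a).comp hb).comp hθ.tendsto_atTop
    rw [Polynomial.eval_eq_sum_range, hqd]
    refine tendsto_nhds_unique h1 (tendsto_const_nhds.congr fun k => ?_)
    have := hqroot (φ (θ k)) (b (θ k)) (hφ _) i
    rw [Polynomial.eval_eq_sum_range, hqd] at this
    exact this.symm
  have hy'x : y' = x := hvfib y' hy'q (hy'v ▸ hvx)
  subst hy'x
  obtain ⟨k, hk⟩ := (hlim.eventually hU).exists
  refine ⟨y (θ k), hk, fun h => hba (θ k) ?_, fun f hf => ?_⟩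
  · funext j
    obtain ⟨t, ht⟩ := hmk (g (X j))
    have h1 := hφ (θ k) (X j)
    rw [← ht, hpt, show (fun i => φ (θ k) (mk (X i))) = y' from h] at h1
    have h2 : a j = φx (mk t) := by rw [ht]
    rw [h2, hφx, h1]; simp
  · have : mk f = 0 := Ideal.Quotient.eq_zero_iff_mem.2 hf
    rw [show MvPolynomial.eval (y (θ k)) f = φ (θ k) (mk f) from (hpt _ f).symm, this, map_zero]

/-! ### Isolated roots under field embeddings -/

theorem nhdsWithin_diff_eq_bot_iff {Y : Type*} [TopologicalSpace Y] (Z : Set Y) (x : Y) :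
    𝓝[Z \ {x}] x = ⊥ ↔ ∃ U ∈ 𝓝 x, ∀ y ∈ U, y ∈ Z → y = x := by
  rw [← empty_mem_iff_bot, mem_nhdsWithin_iff_exists_mem_nhds_inter]
  refine exists_congr fun U => and_congr_right fun _ => ⟨fun h y hyU hyZ => ?_, fun h y hy => ?_⟩
  · by_contra hne
    exact h ⟨hyU, hyZ, hne⟩
  · exact hy.2.2 (h y hy.1 hy.2.1)

/-- Algebraic certificate of isolatedness: `X_i - x_i` is nilpotent in the local ring at `x` of the
scheme defined by `G`. -/
theorem exists_certificate_of_isIsolatedRoot {k n : ℕ} (G : Fin k → MvPolynomial (Fin n) ℂ)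
    (x : Fin n → ℂ) (hx : IsIsolatedRoot G x) (i : Fin n) :
    ∃ (h : MvPolynomial (Fin n) ℂ) (N : ℕ), MvPolynomial.eval x h ≠ 0 ∧
      h * (X i - C (x i)) ^ N ∈ Ideal.span (Set.range G) := by
  obtain ⟨hx0, hiso⟩ := hx
  obtain ⟨U, hU, hUx⟩ := (nhdsWithin_diff_eq_bot_iff _ _).1 hiso
  by_contra! H
  -- A prime disjoint from `S` is contained in the maximal ideal of `x` and omits `X i - x i`.
  let S : Submonoid (MvPolynomial (Fin n) ℂ) :=
    { carrier := {f | ∃ (h : MvPolynomial (Fin n) ℂ) (N : ℕ), MvPolynomial.eval x h ≠ 0 ∧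
        f = h * (X i - C (x i)) ^ N}
      one_mem' := ⟨1, 0, by simp, by simp⟩
      mul_mem' := by
        rintro _ _ ⟨h, N, hh, rfl⟩ ⟨h', N', hh', rfl⟩
        exact ⟨h * h', N + N', by simp [hh, hh'], by ring⟩ }
  have hdisj : Disjoint (Ideal.span (Set.range G) : Set (MvPolynomial (Fin n) ℂ)) S := by
    rw [Set.disjoint_left]
    rintro _ hf ⟨h, N, hh, rfl⟩
    exact H h N hh hf
  obtain ⟨p, hp, hIp, hpS⟩ := Ideal.exists_le_prime_disjoint _ S hdisj
  rw [Set.disjoint_left] at hpS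
  obtain ⟨y, hyU, hyx, hy⟩ := exists_near_point p x
    (fun f hf => by
      by_contra hne
      exact hpS hf ⟨f, 0, hne, by simp⟩)
    (X i - C (x i)) (by simp) (fun hf => hpS hf ⟨1, 1, by simp, by simp⟩) U hU
  exact hyx (hUx y hyU fun j => hy _ (hIp (Ideal.subset_span ⟨j, rfl⟩)))

/-- Metric isolatedness over `ℂ` passes to metric isolatedness over any normed field along a field
embedding, with no continuity assumption on the embedding. -/
theorem IsIsolatedRoot.map_hom {K : Type} [NormedField K] {k n : ℕ}
    {G : Fin k → MvPolynomial (Fin n) ℂ} {x : Fin n → ℂ} (hx : IsIsolatedRoot G x)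
    (τ : ℂ →+* K) : IsIsolatedRoot (fun i => (G i).map τ) (fun j => τ (x j)) := by
  have hmap : ∀ f : MvPolynomial (Fin n) ℂ,
      MvPolynomial.eval (fun j => τ (x j)) (f.map τ) = τ (MvPolynomial.eval x f) := fun f => by
    rw [MvPolynomial.eval_map]
    exact (MvPolynomial.eval₂_comp τ x f).symm
  refine ⟨fun i => by rw [hmap, hx.1 i, map_zero], ?_⟩
  choose h N hh hI using exists_certificate_of_isIsolatedRoot G x hx
  rw [nhdsWithin_diff_eq_bot_iff]
  refine ⟨⋂ i, {y | MvPolynomial.eval y ((h i).map τ) ≠ 0}, ?_, fun y hyU hyZ => ?_⟩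
  · refine Filter.iInter_mem.2 fun i => IsOpen.mem_nhds ?_ ?_
    · exact isOpen_ne.preimage (MvPolynomial.continuous_eval ((h i).map τ))
    · change MvPolynomial.eval _ _ ≠ 0
      rw [hmap]
      exact (map_ne_zero τ).2 (hh i)
  · funext i
    have h1 : MvPolynomial.eval y ((h i * (X i - C (x i)) ^ N i).map τ) = 0 := by
      have hle : Ideal.span (Set.range G) ≤
          RingHom.ker ((MvPolynomial.eval y).comp (MvPolynomial.map τ)) := by
        rw [Ideal.span_le]
        rintro _ ⟨j, rfl⟩
        exact hyZ j
      exact hle (hI i)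
    have h2 : MvPolynomial.eval y ((h i).map τ) ≠ 0 := Set.mem_iInter.1 hyU i
    simp only [map_mul, map_pow, map_sub, MvPolynomial.map_X, MvPolynomial.map_C,
      MvPolynomial.eval_X, MvPolynomial.eval_C, mul_eq_zero, h2, false_or] at h1
    by_contra hne
    exact pow_ne_zero (N i) (sub_ne_zero.2 hne) h1

/-! ### An embedding of the complex numbers -/

/-- An injection between transcendence bases over `ℤ` extends to a field embedding. -/
theorem exists_hom_complex (K : Type) [Field K] [CharZero K] [IsAlgClosed K]
    (hK : Cardinal.continuum ≤ Cardinal.mk K) : Nonempty (ℂ →+* K) := by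
  obtain ⟨s, hs⟩ := exists_isTranscendenceBasis ℤ ℂ
  obtain ⟨t, ht⟩ := exists_isTranscendenceBasis ℤ K
  have h1 : Cardinal.mk s ≤ Cardinal.continuum := by
    rw [← Cardinal.mk_complex]; exact Cardinal.mk_set_le s
  have h2 := IsAlgClosed.cardinal_eq_cardinal_transcendence_basis_of_aleph0_lt' _ ht
    (le_of_eq Cardinal.mk_int) (Cardinal.aleph0_lt_continuum.trans_le hK)
  obtain ⟨j⟩ : Nonempty (s ↪ t) := by
    rw [← Cardinal.le_def, ← h2]; exact h1.trans hK
  have hi : AlgebraicIndependent ℤ (fun i : s => ((j i : t) : K)) := ht.1.comp j j.injective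
  let f : Algebra.adjoin ℤ (Set.range ((↑) : s → ℂ)) →ₐ[ℤ] K :=
    (MvPolynomial.aeval (fun i : s => ((j i : t) : K))).comp hs.1.aevalEquiv.symm.toAlgHom
  have hf : Function.Injective f := by
    have hi' : Function.Injective (MvPolynomial.aeval (R := ℤ) (fun i : s => ((j i : t) : K))) := hi
    exact hi'.comp hs.1.aevalEquiv.symm.injective
  let := f.toRingHom.toAlgebra
  have : FaithfulSMul (Algebra.adjoin ℤ (Set.range ((↑) : s → ℂ))) K :=
    (faithfulSMul_iff_algebraMap_injective _ _).2 hf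
  have := hs.isAlgebraic
  exact ⟨(IsAlgClosed.lift : ℂ →ₐ[Algebra.adjoin ℤ (Set.range ((↑) : s → ℂ))] K).toRingHom⟩

/-! ### Degrees and the compositum -/

theorem natDegree_minpoly_rat_le {𝓛 : Type} [Field 𝓛] [Algebra ℚ 𝓛] [FiniteDimensional ℚ 𝓛]
    (ι : 𝓛 →+* ℂ) (δ : ℕ) (z : ℂ) (hz : HasDegreeAtMost ι δ z) :
    IsIntegral ℚ z ∧ (minpoly ℚ z).natDegree ≤ Module.finrank ℚ 𝓛 * δ := by
  obtain ⟨q, hq0, hqd, hqz⟩ := hz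
  let _ : Algebra 𝓛 ℂ := ι.toAlgebra
  have : IsScalarTower ℚ 𝓛 ℂ := IsScalarTower.of_algebraMap_eq fun c => by simp
  have hqz' : Polynomial.aeval z q = 0 := hqz
  have halg : IsAlgebraic 𝓛 z := ⟨q, hq0, hqz'⟩
  have hint : IsIntegral 𝓛 z := halg.isIntegral
  have hdeg : (minpoly 𝓛 z).natDegree ≤ δ :=
    (Polynomial.natDegree_le_natDegree (minpoly.degree_le_of_ne_zero 𝓛 z hq0 hqz')).trans hqd
  let E := IntermediateField.adjoin 𝓛 {z}
  have : FiniteDimensional 𝓛 E := IntermediateField.adjoin.finiteDimensional hint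
  have hE : Module.finrank 𝓛 E = (minpoly 𝓛 z).natDegree := IntermediateField.adjoin.finrank hint
  have : FiniteDimensional ℚ E := FiniteDimensional.trans ℚ 𝓛 E
  let z' : E := ⟨z, IntermediateField.mem_adjoin_simple_self 𝓛 z⟩
  have hz' : minpoly ℚ z = minpoly ℚ z' :=
    minpoly.algebraMap_eq (A := ℚ) (B := E) (B' := ℂ) Subtype.val_injective z'
  refine ⟨?_, ?_⟩
  · exact isIntegral_trans z hint
  · rw [hz']
    refine (minpoly.natDegree_le z').trans ?_
    rw [← Module.finrank_mul_finrank ℚ 𝓛 E, hE]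
    exact Nat.mul_le_mul_left _ hdeg

theorem mem_compositum {C2 : Type} [Field C2] [Algebra ℚ_[2] C2] (D : ℕ) (τ : ℂ →+* C2) (z : ℂ)
    (hint : IsIntegral ℚ z) (hz : (minpoly ℚ z).natDegree ≤ D) :
    τ z ∈ sSup {F : IntermediateField ℚ_[2] C2 |
      FiniteDimensional ℚ_[2] ↥F ∧ Module.finrank ℚ_[2] ↥F ≤ D} := by
  let r : Polynomial ℚ_[2] := (minpoly ℚ z).map (algebraMap ℚ ℚ_[2])
  have hr : r.Monic := (minpoly.monic hint).map _
  have hr0 : Polynomial.aeval (τ z) r = 0 := by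
    have h1 := Polynomial.hom_eval₂ (minpoly ℚ z) (algebraMap ℚ ℂ) τ z
    rw [show (minpoly ℚ z).eval₂ (algebraMap ℚ ℂ) z = 0 from minpoly.aeval ℚ z, map_zero] at h1
    rw [Polynomial.aeval_def, Polynomial.eval₂_map, h1]
    congr 1
    exact Subsingleton.elim _ _
  have hint2 : IsIntegral ℚ_[2] (τ z) := ⟨r, hr, hr0⟩
  have hmem : IntermediateField.adjoin ℚ_[2] {τ z} ∈ {F : IntermediateField ℚ_[2] C2 |
      FiniteDimensional ℚ_[2] ↥F ∧ Module.finrank ℚ_[2] ↥F ≤ D} := by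
    refine ⟨IntermediateField.adjoin.finiteDimensional hint2, ?_⟩
    rw [IntermediateField.adjoin.finrank hint2]
    refine le_trans (Polynomial.natDegree_le_natDegree
      (minpoly.degree_le_of_ne_zero _ _ hr.ne_zero hr0)) ?_
    exact Polynomial.natDegree_map_le.trans hz
  exact le_sSup hmem (IntermediateField.mem_adjoin_simple_self _ _)

/-- **Explicit bound for Corollary 3, number field case.** Suppose `γ(n,m)` bounds the number
of isolated roots of sparse systems over finite extensions of `ℚ_p` as in Theorem 1.  Let `L`
be the compositum inside `ℂ₂` of all finite extensions of `ℚ₂` of degree at most `d·δ`, and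
let `D2` and `f2` be its degree and residue field degree over `ℚ₂`.  Then any `k × n`
`m`-sparse polynomial system over a degree-`d` extension `𝓛` of `ℚ`, regarded as a subfield
of `ℂ` via an embedding `ι`, has at most `2^{n·D2}·(1 - 1/2^{f2})^n·γ(n,m)` isolated roots in
`ℂⁿ` of degree at most `δ` over `𝓛`. -/
theorem bounded_degree_roots_number_field_explicit (γ : ℕ × ℕ → ℕ) (hγ : LocalSparseBound γ)
    (d δ : ℕ) (hd : 0 < d) (hδ : 0 < δ) :
    ∀ (C2 : Type) (_ : NormedField C2) (_ : IsUltrametricDist C2)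
      (_ : CompleteSpace C2) (_ : IsAlgClosed C2) (_ : Algebra ℚ_[2] C2)
      (_ : Isometry (algebraMap ℚ_[2] C2))
      (_ : Dense {x : C2 | IsAlgebraic ℚ_[2] x})
      (L : IntermediateField ℚ_[2] C2),
      L = sSup {F : IntermediateField ℚ_[2] C2 |
            FiniteDimensional ℚ_[2] ↥F ∧ Module.finrank ℚ_[2] ↥F ≤ d * δ} →
      ∀ (_ : FiniteDimensional ℚ_[2] ↥L) (D2 f2 e2 : ℕ),
        Module.finrank ℚ_[2] ↥L = D2 → 0 < e2 → e2 * f2 = D2 →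
        (∀ x : ↥L, x ≠ 0 → ∃ j : ℤ, ‖(x : C2)‖ = (2 : ℝ) ^ ((j : ℝ) / (e2 : ℝ))) →
        (∃ x : ↥L, x ≠ 0 ∧ ‖(x : C2)‖ = (2 : ℝ) ^ (-(1 : ℝ) / (e2 : ℝ))) →
      ∀ (𝓛 : Type) (_ : Field 𝓛) (_ : Algebra ℚ 𝓛) (_ : FiniteDimensional ℚ 𝓛)
        (_ : Module.finrank ℚ 𝓛 = d)
        (ι : 𝓛 →+* ℂ)
        (k n m : ℕ) (G : Fin k → MvPolynomial (Fin n) 𝓛), IsSparseSystem G m →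
          {x : Fin n → ℂ | IsIsolatedRoot (fun i => (G i).map ι) x ∧
              ∀ i, HasDegreeAtMost ι δ (x i)}.Finite ∧
          ({x : Fin n → ℂ | IsIsolatedRoot (fun i => (G i).map ι) x ∧
              ∀ i, HasDegreeAtMost ι δ (x i)}.ncard : ℝ) ≤
            (2 : ℝ) ^ (n * D2) * (1 - 1 / (2 : ℝ) ^ f2) ^ n * γ (n, m) := by
  intro C2 _ _ _ _ _ hisom _ L hL _ D2 f2 e2 hD2 he2 hef hval hunif 𝓛 _ _ _ hd𝓛 ι k n m G hG
  have hinj2 : Function.Injective (algebraMap ℚ_[2] C2) := (algebraMap ℚ_[2] C2).injective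
  have : CharZero C2 := charZero_of_injective_algebraMap hinj2
  have hcard : Cardinal.continuum ≤ Cardinal.mk C2 :=
    (continuum_le_cardinal_of_nontriviallyNormedField ℚ_[2]).trans
      (Cardinal.mk_le_of_injective hinj2)
  obtain ⟨τ⟩ := exists_hom_complex C2 hcard
  have hmem : ∀ z, HasDegreeAtMost ι δ z → τ z ∈ L := by
    intro z hz
    obtain ⟨h1, h2⟩ := natDegree_minpoly_rat_le ι δ z hz
    rw [hL]
    exact mem_compositum (d * δ) τ z h1 (hd𝓛 ▸ h2)
  have hcoef : ∀ c, τ (ι c) ∈ L := fun c => hmem _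
    ⟨Polynomial.X - Polynomial.C c, Polynomial.X_sub_C_ne_zero c,
      (Polynomial.natDegree_X_sub_C c).le.trans hδ, by simp⟩
  let κ : 𝓛 →+* L := (τ.comp ι).codRestrict L hcoef
  have hκ : (algebraMap L C2).comp κ = τ.comp ι := rfl
  -- `κ` is injective, so it preserves the supports.
  have hG' : IsSparseSystem (fun i => (G i).map κ) m := by
    refine ⟨fun i h => hG.1 i ?_, ?_⟩
    · exact MvPolynomial.map_injective κ κ.injective (h.trans (map_zero _).symm)
    · rw [← hG.2]
      simp only [MvPolynomial.support_map_of_injective _ κ.injective]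
  obtain ⟨hfin, hbound⟩ := hγ 2 inferInstance D2 (hD2 ▸ Module.finrank_pos) C2 _ ‹_› ‹_› ‹_› _
    hisom ‹_› L _ _ _ inferInstance ‹_› hD2 e2 f2 he2 hef hval hunif k n m
    (fun i => (G i).map κ) hG'
  set T := {ζ : Fin n → L | IsIsolatedRoot
    (fun i => ((G i).map κ).map (algebraMap L C2)) (fun j => algebraMap L C2 (ζ j))} with hT
  set S := {x : Fin n → ℂ | IsIsolatedRoot (fun i => (G i).map ι) x ∧
              ∀ i, HasDegreeAtMost ι δ (x i)} with hS
  have hsub : (fun (x : Fin n → ℂ) j => τ (x j)) '' S ⊆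
      (fun (ζ : Fin n → L) j => algebraMap L C2 (ζ j)) '' T := by
    rintro _ ⟨x, ⟨hx, hxd⟩, rfl⟩
    refine ⟨fun j => ⟨τ (x j), hmem _ (hxd j)⟩, ?_, rfl⟩
    have h1 := hx.map_hom τ
    simp only [MvPolynomial.map_map] at h1
    rw [hT, Set.mem_ofPred_eq]
    simp only [MvPolynomial.map_map, hκ]
    exact h1
  have hτinj : Function.Injective (fun (x : Fin n → ℂ) j => τ (x j)) :=
    τ.injective.comp_left
  have hEfin := hfin.image (fun (ζ : Fin n → L) j => algebraMap L C2 (ζ j))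
  refine ⟨Set.Finite.of_finite_image (hEfin.subset hsub) hτinj.injOn, ?_⟩
  have hle : S.ncard ≤ T.ncard := by
    rw [← Set.ncard_image_of_injective S hτinj]
    exact (Set.ncard_le_ncard hsub hEfin).trans (Set.ncard_image_le hfin)
  calc (S.ncard : ℝ) ≤ T.ncard := by exact_mod_cast hle
    _ ≤ _ := by
      rw [mul_comm n D2]
      exact_mod_cast hbound
end

section
/- Let p be a prime and let g_1,…,g_k ∈ ℂ_p[x_1,…,x_n] be polynomials. Then there exists a matrix (a_{ij}) with entries in ℚ_p, having n rows and k columns, such that the zero set in ℂ_p^n of the n×n-tuple (a_{11}g_1 + ⋯ + a_{1k}g_k, …, a_{n1}g_1 + ⋯ + a_{nk}g_k) is the union of the zero set of (g_1,…,g_k) in ℂ_p^n and a finite (possibly empty) set of points. -/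
/-!
A generic linear combination `∑ j, a j • g j` with coefficients in an infinite field avoids any
finite family of ideals none of which contains all the `g j`, because a vector space over an
infinite field is not a finite union of proper subspaces (`exists_combination_avoiding`).

Choose the rows one at a time, each new combination avoiding those minimal primes of the ideal of
the preceding combinations that do not contain all the `g j`. Every choice raises by one the height
of the primes that contain the combinations but not all of the `g j`; after `m` rows these have
height at least `m` (`exists_combinations_height`).

Take `m = n`, the Krull dimension of the polynomial ring in `n` variables. If `x` is a zero of the
`n` combinations but not of all the `g j`, the vanishing ideal of `x` contains a minimal prime of
the ideal of the combinations. This minimal prime already has height `n`, so it equals the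
vanishing ideal. A Noetherian ring has finitely many minimal primes over an ideal, and a point is
determined by its vanishing ideal, so only finitely many such `x` exist.
-/

open MvPolynomial Filter Topology

/-- Avoidance by a linear combination over an infinite field. -/
lemma exists_combination_avoiding {K R : Type*} [Field K] [Infinite K] [CommRing R] [Algebra K R]
    {k : ℕ} (g : Fin k → R) (T : Set (Ideal R)) (hT : T.Finite)
    (hg : ∀ Q ∈ T, ∃ j, g j ∉ Q) :
    ∃ a : Fin k → K, ∀ Q ∈ T, ∑ j, a j • g j ∉ Q := by
  classical
  -- `W Q` is the space of coefficient vectors whose combination lies in `Q`.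
  let W : Ideal R → Submodule K (Fin k → K) := fun Q =>
    (Q.restrictScalars K).comap (Fintype.linearCombination K g)
  have hW : ∀ Q a, a ∈ W Q ↔ ∑ j, a j • g j ∈ Q := by
    intro Q a
    simp [W, Fintype.linearCombination_apply]
  have htop : (⊤ : Submodule K (Fin k → K)) ∉ hT.toFinset.image W := by
    intro h
    obtain ⟨Q, hQ, hQW⟩ := Finset.mem_image.mp h
    obtain ⟨j, hj⟩ := hg Q (hT.mem_toFinset.mp hQ)
    have hmem : Pi.single j (1 : K) ∈ W Q := hQW ▸ Submodule.mem_top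
    rw [hW] at hmem
    simp [Pi.single_apply] at hmem
    exact hj hmem
  obtain ⟨a, ha⟩ := (Set.ne_univ_iff_exists_notMem _).mp
    (Subspace.biUnion_ne_univ_of_top_notMem htop)
  refine ⟨a, fun Q hQ hmem => ha ?_⟩
  simp only [Set.mem_iUnion]
  exact ⟨W Q, Finset.mem_image_of_mem W (hT.mem_toFinset.mpr hQ), (hW Q a).mpr hmem⟩

/-- Suitable `m` linear combinations of the `g j` cut out, away from the common zeros of the `g j`,
a locus of codimension at least `m`. -/
lemma exists_combinations_height (K : Type*) {R : Type*} [Field K] [Infinite K] [CommRing R]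
    [IsNoetherianRing R] [Algebra K R] {k : ℕ} (g : Fin k → R) (m : ℕ) :
    ∃ a : Fin m → Fin k → K, ∀ P : Ideal R, P.IsPrime → (∀ i, ∑ j, a i j • g j ∈ P) →
      (∃ j, g j ∉ P) → (m : ℕ∞) ≤ P.height := by
  induction m with
  | zero => exact ⟨Fin.elim0, fun P _ _ _ => by simp⟩
  | succ m ih =>
    obtain ⟨a, ha⟩ := ih
    let I : Ideal R := Ideal.span (Set.range fun i => ∑ j, a i j • g j)
    obtain ⟨b, hb⟩ := exists_combination_avoiding (K := K) g
      {Q | Q ∈ I.minimalPrimes ∧ ∃ j, g j ∉ Q}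
      ((Ideal.finite_minimalPrimes_of_isNoetherianRing R I).subset fun Q hQ => hQ.1)
      (fun Q hQ => hQ.2)
    refine ⟨Fin.snoc a b, fun P hP hmem ⟨j, hj⟩ => ?_⟩
    have hIP : I ≤ P := by
      rw [Ideal.span_le]
      rintro _ ⟨i, rfl⟩
      simpa using hmem i.castSucc
    have hbP : ∑ j, b j • g j ∈ P := by simpa using hmem (Fin.last m)
    obtain ⟨Q, hQ, hQP⟩ := Ideal.exists_minimalPrimes_le hIP
    have hQprime : Q.IsPrime := hQ.1.1
    have hjQ : ∃ j, g j ∉ Q := ⟨j, fun h => hj (hQP h)⟩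
    have hlt : Q < P := lt_of_le_of_ne hQP fun h => hb Q ⟨hQ, hjQ⟩ (h ▸ hbP)
    have hQm : (m : ℕ∞) ≤ Q.height :=
      ha Q hQprime (fun i => hQ.1.2 (Ideal.subset_span ⟨i, rfl⟩)) hjQ
    calc ((m + 1 : ℕ) : ℕ∞) = m + 1 := by push_cast; rfl
      _ ≤ Q.height + 1 := by gcongr
      _ ≤ P.height := Ideal.height_add_one_le_of_lt_of_isPrime hlt

/-- **Lemma (reduction to square systems).** For any polynomials `g₁, …, g_k` over `ℂ_p` in
`n` variables, there is an `n × k` matrix `(a_{ij})` with entries in `ℚ_p` such that the zero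
set in `ℂ_pⁿ` of the square system `(∑_j a_{1j}·g_j, …, ∑_j a_{nj}·g_j)` is the union of the
zero set of `(g₁, …, g_k)` and a finite (possibly empty) set of points.  Here `Cp` is any
field satisfying the characterizing axioms of `ℂ_p`. -/
theorem square_system_reduction (p : ℕ) [Fact p.Prime]
    (Cp : Type) [NormedField Cp] [IsUltrametricDist Cp]
    [CompleteSpace Cp] [IsAlgClosed Cp] [Algebra ℚ_[p] Cp]
    (hiso : Isometry (algebraMap ℚ_[p] Cp))
    (hdense : Dense {x : Cp | IsAlgebraic ℚ_[p] x})
    (k n : ℕ) (g : Fin k → MvPolynomial (Fin n) Cp) :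
    ∃ a : Fin n → Fin k → ℚ_[p], ∃ S : Set (Fin n → Cp), S.Finite ∧
      zeroSet (fun i => ∑ j, MvPolynomial.C (algebraMap ℚ_[p] Cp (a i j)) * g j) =
        zeroSet g ∪ S := by
  have : Infinite ℚ_[p] := CharZero.infinite _
  obtain ⟨a, ha⟩ := exists_combinations_height ℚ_[p] g n
  have hsmul : ∀ i, ∑ j, MvPolynomial.C (algebraMap ℚ_[p] Cp (a i j)) * g j
      = ∑ j, a i j • g j := fun i => Finset.sum_congr rfl fun j _ => by
    rw [← MvPolynomial.smul_eq_C_mul, algebraMap_smul]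
  refine ⟨a, ?_⟩
  simp only [hsmul]
  set f : Fin n → MvPolynomial (Fin n) Cp := fun i => ∑ j, a i j • g j with hf
  have hsub : zeroSet g ⊆ zeroSet f := by
    intro x hx i
    simp only [hf, ← hsmul, map_sum, map_mul]
    exact Finset.sum_eq_zero fun j _ => by rw [hx j, mul_zero]
  refine ⟨zeroSet f \ zeroSet g, ?_, (Set.union_sdiff_cancel hsub).symm⟩
  let I : Ideal (MvPolynomial (Fin n) Cp) := Ideal.span (Set.range f)
  -- The vanishing ideal of a point.
  let M : (Fin n → Cp) → Ideal (MvPolynomial (Fin n) Cp) := fun x =>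
    RingHom.ker (MvPolynomial.eval x)
  have hdim : ringKrullDim (MvPolynomial (Fin n) Cp) = n := by
    rw [MvPolynomial.ringKrullDim_of_isNoetherianRing]
    simp
  have hinj : Function.Injective M := by
    intro x y hxy
    funext i
    have hx : X i - C (x i) ∈ M x := by simp [M, RingHom.mem_ker]
    rw [hxy] at hx
    have hy : y i - x i = 0 := by simpa [M, RingHom.mem_ker] using hx
    exact (sub_eq_zero.mp hy).symm
  refine Set.Finite.of_finite_image (f := M)
    ((Ideal.finite_minimalPrimes_of_isNoetherianRing _ I).subset ?_) hinj.injOn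
  rintro _ ⟨x, ⟨hxf, hxg⟩, rfl⟩
  have hprime : (M x).IsPrime := RingHom.ker_isPrime _
  have hIM : I ≤ M x := by
    rw [Ideal.span_le]
    rintro _ ⟨i, rfl⟩
    exact hxf i
  obtain ⟨j, hj⟩ : ∃ j, MvPolynomial.eval x (g j) ≠ 0 := by
    by_contra! h
    exact hxg h
  obtain ⟨P, hP, hPM⟩ := Ideal.exists_minimalPrimes_le hIM
  have hPprime : P.IsPrime := hP.1.1
  have hPn : (n : ℕ∞) ≤ P.height :=
    ha P hPprime (fun i => hP.1.2 (Ideal.subset_span ⟨i, rfl⟩)) ⟨j, fun h => hj (hPM h)⟩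
  have hMn : (M x).height ≤ (n : ℕ∞) := by
    have h := Ideal.height_le_ringKrullDim_of_isPrime (I := M x)
    rw [hdim] at h
    exact_mod_cast h
  rcases hPM.eq_or_lt with h | h
  · exact h ▸ hP
  · have h1 := (add_le_add_left hPn 1).trans
      ((Ideal.height_add_one_le_of_lt_of_isPrime h).trans hMn)
    norm_cast at h1
    omega
end
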